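/- Let R be a commutative Noetherian ring admitting a maximal ideal m such that R_m is not complete (in its maximal-adic topology) or dim R_m ≥ 2. Then there exists a flat cover f : F → M of R-modules such that for every injective cogenerator E, the morphism Hom_R(f,E) is not an injective envelope. -/

import Mathlib

section Helpers

/-- Products of flat modules over a Noetherian ring are flat. -/
theorem aux_flat_pi {A B X : Type*} [CommRing A] [IsNoetherianRing A] [AddCommGroup B]
    [Module A B] [Module.Flat A B] : Module.Flat A (X → B) := by
  apply Module.Flat.of_forall_isTrivialRelation
  intro l f x hfx
  let N : Submodule A (Fin l → A) := LinearMap.ker (Fintype.linearCombination A f)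
  obtain ⟨k, y, hy⟩ := Submodule.fg_iff_exists_fin_generating_family.1
    (IsNoetherian.noetherian N)
  have key : ∀ t : X, ∃ w : Fin k → B, ∀ i, x i t = ∑ s, y s i • w s := by
    intro t
    have h0 : ∑ i, f i • x i t = 0 := by
      have := congrFun hfx t
      simpa using this
    obtain ⟨q, a, z, h1, h2⟩ := Module.Flat.isTrivialRelation_of_sum_smul_eq_zero h0
    beta_reduce at h1 h2
    have h3 : ∀ j, ∃ c : Fin k → A, ∑ s, c s • y s = fun i => a i j := by
      intro j
      have : (fun i => a i j) ∈ N := by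
        change Fintype.linearCombination A f (fun i => a i j) = 0
        rw [Fintype.linearCombination_apply, ← h2 j]
        exact Finset.sum_congr rfl fun i _ => by rw [smul_eq_mul, mul_comm]
      rw [← hy] at this
      exact (Submodule.mem_span_range_iff_exists_fun A).1 this
    choose c hc using h3
    refine ⟨fun s => ∑ j, c j s • z j, fun i => ?_⟩
    rw [h1 i]
    have : ∀ j, a i j = ∑ s, c j s * y s i := by
      intro j
      have := congrFun (hc j) i
      simp only [Finset.sum_apply, Pi.smul_apply, smul_eq_mul] at this
      exact this.symm
    simp_rw [this, Finset.sum_smul, Finset.smul_sum]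
    rw [Finset.sum_comm]
    refine Finset.sum_congr rfl fun s _ => Finset.sum_congr rfl fun j _ => ?_
    rw [smul_smul, mul_comm]
  choose w hw using key
  refine ⟨k, fun i s => y s i, fun s t => w t s, fun i => ?_, fun s => ?_⟩
  · ext t
    simp [hw t i]
  · have : y s ∈ N := by rw [← hy]; exact Submodule.subset_span ⟨s, rfl⟩
    have h : Fintype.linearCombination A f (y s) = 0 := this
    rw [Fintype.linearCombination_apply] at h
    rw [← h]
    exact Finset.sum_congr rfl fun i _ => by rw [smul_eq_mul, mul_comm]

theorem aux_pure {A G F : Type*} [CommRing A] [AddCommGroup G] [Module A G] [AddCommGroup F]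
    [Module A F] [Module.Flat A F] (π : G →ₗ[A] F) (hπ : Function.Surjective π) (J : Ideal A)
    (g : LinearMap.ker π) (hg : (g : G) ∈ (J • ⊤ : Submodule A G)) :
    g ∈ (J • ⊤ : Submodule A (LinearMap.ker π)) := by
  have htop : (⊤ : Submodule A G) = Submodule.span A (Set.range (id : G → G)) := by simp
  rw [htop, Submodule.mem_ideal_smul_span_iff_exists_sum] at hg
  obtain ⟨a, ha, hsum⟩ := hg
  have hs : ∑ i : a.support, a i • (i : G) = g := by
    rw [← hsum, Finsupp.sum, ← Finset.sum_coe_sort a.support]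
    rfl
  have h0 : ∑ i : a.support, a i • π (i : G) = 0 := by
    have h := congrArg π hs
    rw [map_sum] at h
    simp only [map_smul] at h
    rw [h]; exact g.2
  obtain ⟨q, b, z, h1, h2⟩ := Module.Flat.isTrivialRelation_of_sum_smul_eq_zero h0
  beta_reduce at h1 h2
  choose z' hz' using fun j => hπ (z j)
  let h : a.support → LinearMap.ker π := fun i => ⟨(i : G) - ∑ j, b i j • z' j, by
    rw [LinearMap.mem_ker, map_sub, map_sum, h1 i, sub_eq_zero]
    exact Finset.sum_congr rfl fun j _ => by rw [map_smul, hz']⟩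
  have : g = ∑ i : a.support, a i • h i := by
    apply Subtype.ext
    rw [← hs]
    simp only [AddSubmonoidClass.coe_finsetSum, SetLike.val_smul, h, smul_sub,
      Finset.sum_sub_distrib, Finset.smul_sum, smul_smul]
    rw [Finset.sum_comm (s := Finset.univ (α := a.support))]
    simp_rw [← Finset.sum_smul, h2]
    simp
  rw [this]
  exact Submodule.sum_mem _ fun i _ => Submodule.smul_mem_smul (ha i) trivial

theorem aux_ext {A G F : Type*} [CommRing A] [AddCommGroup G] [Module A G] [AddCommGroup F]
    [Module A F] [Module.Flat A F] (π : G →ₗ[A] F) (hπ : Function.Surjective π) (J : Ideal A)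
    [J.IsMaximal] : ∃ e : G →ₗ[A] (LinearMap.ker π ⧸ (J • ⊤ : Submodule A (LinearMap.ker π))),
      ∀ g : LinearMap.ker π, e g = Submodule.Quotient.mk g := by
  let _ : Field (A ⧸ J) := Ideal.Quotient.field J
  let ι : (LinearMap.ker π ⧸ (J • ⊤ : Submodule A (LinearMap.ker π))) →ₗ[A]
      G ⧸ (J • ⊤ : Submodule A G) := Submodule.mapQ _ _ (LinearMap.ker π).subtype (by
    rw [← Submodule.map_le_iff_le_comap, Submodule.map_smul'']
    exact Submodule.smul_mono le_rfl le_top)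
  have hι : Function.Injective ι := by
    rw [injective_iff_map_eq_zero]
    intro q
    induction q using Submodule.Quotient.induction_on with | _ g => ?_
    intro hq
    rw [Submodule.Quotient.mk_eq_zero]
    apply aux_pure π hπ
    exact (Submodule.Quotient.mk_eq_zero _).1 hq
  let ι' : (LinearMap.ker π ⧸ (J • ⊤ : Submodule A (LinearMap.ker π))) →ₗ[A ⧸ J]
      G ⧸ (J • ⊤ : Submodule A G) :=
    LinearMap.extendScalarsOfSurjective (R := A) (S := A ⧸ J) Ideal.Quotient.mk_surjective ι
  obtain ⟨r, hr⟩ := LinearMap.exists_leftInverse_of_injective ι'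
    (LinearMap.ker_eq_bot.2 hι)
  refine ⟨(r.restrictScalars A) ∘ₗ Submodule.mkQ _, fun g => ?_⟩
  exact LinearMap.congr_fun hr (Submodule.Quotient.mk g)

theorem aux_step {A G F D : Type*} [CommRing A] [AddCommGroup G] [Module A G] [AddCommGroup F]
    [Module A F] [Module.Flat A F] [AddCommGroup D] [Module A D] [Module.Projective A G]
    (π : G →ₗ[A] F) (hπ : Function.Surjective π) (J : Ideal A)
    [J.IsMaximal] (u : LinearMap.ker π →ₗ[A] D) (n : ℕ) (v : G →ₗ[A] D)
    (hv : ∀ g : LinearMap.ker π, u g - v g ∈ (J ^ n • ⊤ : Submodule A D)) :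
    ∃ v' : G →ₗ[A] D,
      (∀ g : LinearMap.ker π, u g - v' g ∈ (J ^ (n + 1) • ⊤ : Submodule A D)) ∧
      ∀ g, v g - v' g ∈ (J ^ n • ⊤ : Submodule A D) := by
  obtain ⟨e, he⟩ := aux_ext π hπ J
  let P : Submodule A D := J ^ n • ⊤
  let δ : LinearMap.ker π →ₗ[A] P :=
    LinearMap.codRestrict P (u - v ∘ₗ (LinearMap.ker π).subtype) hv
  let δ' : (LinearMap.ker π ⧸ (J • ⊤ : Submodule A (LinearMap.ker π))) →ₗ[A]
      P ⧸ (J • ⊤ : Submodule A P) := Submodule.mapQ _ _ δ (by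
    rw [← Submodule.map_le_iff_le_comap, Submodule.map_smul'']
    exact Submodule.smul_mono le_rfl le_top)
  obtain ⟨w, hw⟩ := Module.projective_lifting_property
    (Submodule.mkQ (J • ⊤ : Submodule A P)) (δ' ∘ₗ e) (Submodule.mkQ_surjective _)
  refine ⟨v + P.subtype ∘ₗ w, fun g => ?_, fun g => ?_⟩
  · have h1 : Submodule.Quotient.mk (p := (J • ⊤ : Submodule A P)) (w g)
        = Submodule.Quotient.mk (δ g) := by
      have := LinearMap.congr_fun hw (g : G)
      simp only [LinearMap.comp_apply, he] at this
      exact this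
    have h2 := (Submodule.Quotient.eq _).1 h1.symm
    have h3 : P.subtype (δ g - w g) ∈ Submodule.map P.subtype (J • ⊤ : Submodule A P) :=
      Submodule.mem_map_of_mem h2
    rw [Submodule.map_smul'', Submodule.map_top, Submodule.range_subtype] at h3
    have h4 : J • P = (J ^ (n + 1) • ⊤ : Submodule A D) := by
      rw [pow_succ', ← smul_eq_mul, Submodule.smul_assoc]
    rw [h4] at h3
    have h5 : u g - (v + P.subtype ∘ₗ w) (g : G) = P.subtype (δ g - w g) := by
      change u g - (v g + (w g : D)) = (u g - v g) - (w g : D)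
      rw [sub_sub]
    rw [h5]; exact h3
  · have : v g - (v + P.subtype ∘ₗ w) g = - (w g : D) := by simp
    rw [this]
    exact neg_mem (w g).2

theorem aux_extend {A G F D : Type*} [CommRing A] [AddCommGroup G] [Module A G] [AddCommGroup F]
    [Module A F] [Module.Flat A F] [AddCommGroup D] [Module A D] [Module.Projective A G]
    (π : G →ₗ[A] F) (hπ : Function.Surjective π) (J : Ideal A)
    [J.IsMaximal] [IsAdicComplete J D] (u : LinearMap.ker π →ₗ[A] D) :
    ∃ v : G →ₗ[A] D, ∀ g : LinearMap.ker π, v g = u g := by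
  let good : ℕ → (G →ₗ[A] D) → Prop := fun n v =>
    ∀ g : LinearMap.ker π, u g - v g ∈ (J ^ n • ⊤ : Submodule A D)
  have step : ∀ (n : ℕ) (v : {v // good n v}), ∃ v' : {v // good (n + 1) v},
      ∀ g, v.1 g - v'.1 g ∈ (J ^ n • ⊤ : Submodule A D) := by
    intro n v
    obtain ⟨v', h1, h2⟩ := aux_step π hπ J u n v.1 v.2
    exact ⟨⟨v', h1⟩, h2⟩
  choose nxt hnxt using step
  let s : ∀ n, {v // good n v} := fun n =>
    Nat.rec (motive := fun n => {v // good n v}) ⟨0, fun g => by simp⟩ nxt n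
  have hs : ∀ n g, (s n).1 g - (s (n + 1)).1 g ∈ (J ^ n • ⊤ : Submodule A D) :=
    fun n => hnxt n (s n)
  have hs' : ∀ m n, m ≤ n → ∀ g, (s n).1 g - (s m).1 g ∈ (J ^ m • ⊤ : Submodule A D) := by
    intro m n hmn g
    induction n, hmn using Nat.le_induction with
    | base => simp
    | succ n hmn ih =>
      have h1 : (J ^ n • ⊤ : Submodule A D) ≤ J ^ m • ⊤ :=
        Submodule.smul_mono_left (Ideal.pow_le_pow_right hmn)
      have := sub_mem ih (h1 (hs n g))
      simpa using this
  have hcomp : ∀ {m n : ℕ} (hle : m ≤ n), Submodule.factorPow J D hle ∘ₗ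
      (Submodule.mkQ (J ^ n • ⊤ : Submodule A D) ∘ₗ (s n).1) =
      (Submodule.mkQ (J ^ m • ⊤ : Submodule A D) ∘ₗ (s m).1) := by
    intro m n hle
    ext g
    exact (Submodule.Quotient.eq _).2 (hs' m n hle g)
  refine ⟨IsAdicComplete.lift J (fun n => Submodule.mkQ (J ^ n • ⊤ : Submodule A D) ∘ₗ (s n).1)
    hcomp, fun g => ?_⟩
  rw [IsHausdorff.eq_iff_smodEq (I := J)]
  intro n
  have h1 := IsAdicComplete.mk_lift J hcomp n g
  have h2 := (Submodule.Quotient.eq _).2 ((s n).2 g)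
  exact h1.trans h2.symm

theorem aux_precover {A B F D : Type*} [CommRing A] [AddCommGroup B] [Module A B]
    [AddCommGroup F] [Module A F] [Module.Flat A F] [AddCommGroup D] [Module A D]
    (J : Ideal A) [J.IsMaximal] [IsAdicComplete J D] (j : D →ₗ[A] B)
    (hj : Function.Injective j) (g : F →ₗ[A] (B ⧸ LinearMap.range j)) :
    ∃ h : F →ₗ[A] B, (LinearMap.range j).mkQ ∘ₗ h = g := by
  let π : (F →₀ A) →ₗ[A] F := Finsupp.linearCombination A id
  have hπ : Function.Surjective π := Finsupp.linearCombination_id_surjective A F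
  obtain ⟨t, ht⟩ := Module.projective_lifting_property (LinearMap.range j).mkQ (g ∘ₗ π)
    (Submodule.mkQ_surjective _)
  have htr : ∀ x : LinearMap.ker π, t x ∈ LinearMap.range j := by
    intro x
    rw [← Submodule.Quotient.mk_eq_zero]
    have := LinearMap.congr_fun ht (x : F →₀ A)
    simp only [LinearMap.comp_apply, Submodule.mkQ_apply] at this
    rw [this, show π x = 0 from x.2, map_zero]
  let u : LinearMap.ker π →ₗ[A] D := (LinearEquiv.ofInjective j hj).symm.toLinearMap ∘ₗ
    LinearMap.codRestrict (LinearMap.range j) (t ∘ₗ (LinearMap.ker π).subtype) htr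
  have hu : ∀ x, j (u x) = t x := by
    intro x
    have := LinearEquiv.apply_symm_apply (LinearEquiv.ofInjective j hj)
      (LinearMap.codRestrict (LinearMap.range j) (t ∘ₗ (LinearMap.ker π).subtype) htr x)
    exact congrArg Subtype.val this
  obtain ⟨v, hv⟩ := aux_extend π hπ J u
  let h' : ((F →₀ A) ⧸ LinearMap.ker π) →ₗ[A] B := (LinearMap.ker π).liftQ (t - j ∘ₗ v) (by
    intro x hx
    rw [LinearMap.mem_ker, LinearMap.sub_apply, LinearMap.comp_apply, hv ⟨x, hx⟩, hu, sub_self])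
  let e := LinearMap.quotKerEquivOfSurjective π hπ
  refine ⟨h' ∘ₗ e.symm.toLinearMap, ?_⟩
  ext y
  obtain ⟨x, rfl⟩ := hπ y
  have he : e.symm (π x) = Submodule.Quotient.mk x := by
    rw [LinearEquiv.symm_apply_eq]; rfl
  have h2 := LinearMap.congr_fun ht x
  simp only [LinearMap.comp_apply, LinearEquiv.coe_coe, he] at h2 ⊢
  rw [← h2]
  change Submodule.Quotient.mk (t x - j (v x)) = Submodule.Quotient.mk (t x)
  rw [Submodule.Quotient.eq]
  simp

end Helpers

universe u

variable (R : Type u) [CommRing R]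

/-- A morphism `f : F → M` with `F` flat is a flat precover if every morphism from a
flat module to `M` factors through `f`. -/
def IsFlatPrecover {F M : Type u} [AddCommGroup F] [AddCommGroup M] [Module R F]
    [Module R M] (f : F →ₗ[R] M) : Prop :=
  Module.Flat R F ∧
    ∀ (F' : Type u) [AddCommGroup F'] [Module R F'], Module.Flat R F' →
      ∀ g : F' →ₗ[R] M, ∃ h : F' →ₗ[R] F, f ∘ₗ h = g

/-- A flat precover `f : F → M` is a flat cover if every `h : F → F` with `f ∘ h = f`
is an automorphism. -/
def IsFlatCover {F M : Type u} [AddCommGroup F] [AddCommGroup M] [Module R F]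
    [Module R M] (f : F →ₗ[R] M) : Prop :=
  IsFlatPrecover R f ∧ ∀ h : F →ₗ[R] F, f ∘ₗ h = f → Function.Bijective h

/-- A morphism `i : M → E` is an injective envelope if `E` is injective, `i` is
injective, and the image of `i` is an essential submodule of `E`. -/
def IsInjectiveEnvelope {M E : Type u} [AddCommGroup M] [AddCommGroup E] [Module R M]
    [Module R E] (i : M →ₗ[R] E) : Prop :=
  Module.Injective R E ∧ Function.Injective i ∧
    ∀ N : Submodule R E, N ≠ ⊥ → N ⊓ LinearMap.range i ≠ ⊥

/-- An injective cogenerator is an injective module `E` such that `Hom(N, E) ≠ 0`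
for every nonzero module `N`. -/
def IsInjectiveCogenerator (E : Type u) [AddCommGroup E] [Module R E] : Prop :=
  Module.Injective R E ∧
    ∀ (N : Type u) [AddCommGroup N] [Module R N], (∃ x : N, x ≠ 0) →
      ∃ g : N →ₗ[R] E, g ≠ 0


theorem aux_core [IsNoetherianRing R] (𝔪 : Ideal R) [𝔪.IsMaximal] (D B : Type u)
    [AddCommGroup D] [Module R D] [IsAdicComplete 𝔪 D] [CommRing B] [Algebra R B]
    [Module.Flat R B] [Nontrivial B] (j : D →ₗ[R] B) (hj : Function.Injective j)
    (d : D) (hd : j d = 1) (x : R) (hx : x ∈ 𝔪) (hxu : IsUnit (algebraMap R B x)) :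
    ∃ (F M : Type u) (_ : AddCommGroup F) (_ : AddCommGroup M) (_ : Module R F)
        (_ : Module R M) (f : F →ₗ[R] M),
      IsFlatCover R f ∧
        ∀ (E : Type u) (_ : AddCommGroup E) (_ : Module R E),
          IsInjectiveCogenerator R E →
            ¬ IsInjectiveEnvelope R (LinearMap.lcomp R E f) := by
  classical
  obtain ⟨n, hn⟩ := Ideal.exists_maximal B
  let κ : Type u := B ⧸ n
  let _ : Field κ := Ideal.Quotient.field n
  let f : (κ → B) →ₗ[R] (κ → B ⧸ LinearMap.range j) :=
    LinearMap.pi fun t => (LinearMap.range j).mkQ ∘ₗ LinearMap.proj t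
  refine ⟨κ → B, κ → B ⧸ LinearMap.range j, inferInstance, inferInstance, inferInstance,
    inferInstance, f, ⟨⟨aux_flat_pi, ?_⟩, ?_⟩, ?_⟩
  · intro F' _ _ hF' g
    choose h hh using fun t : κ => aux_precover 𝔪 j hj (LinearMap.proj t ∘ₗ g)
    refine ⟨LinearMap.pi h, ?_⟩
    ext y t
    exact LinearMap.congr_fun (hh t) y
  · intro h hfh
    have hr : ∀ y t, ∃ c : D, j c = h y t - y t := by
      intro y t
      have := congrFun (LinearMap.congr_fun hfh y) t
      exact (Submodule.Quotient.eq _).1 this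
    have hid : ∀ y, h y = y := by
      intro y
      ext t
      obtain ⟨c, hc⟩ := hr y t
      have hc0 : c = 0 := by
        apply IsHausdorff.haus (I := 𝔪) inferInstance
        intro k
        rw [SModEq.zero]
        obtain ⟨w, hw⟩ := hxu.pow k
        have hy : y = x ^ k • ((↑w⁻¹ : B) • y) := by
          ext s
          simp only [Pi.smul_apply, smul_eq_mul]
          rw [Algebra.smul_def, map_pow, ← hw, Units.mul_inv_cancel_left]
        obtain ⟨c', hc'⟩ := hr ((↑w⁻¹ : B) • y) t
        have : c = x ^ k • c' := by
          apply hj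
          rw [hc, map_smul, hc', smul_sub]
          conv_lhs => rw [hy, map_smul]
          simp only [Pi.smul_apply]
        rw [this]
        exact Submodule.smul_mem_smul (Ideal.pow_mem_pow hx k) trivial
      rw [hc0, map_zero] at hc
      exact (sub_eq_zero.1 hc.symm)
    have : h = LinearMap.id := LinearMap.ext hid
    rw [this]
    exact Function.bijective_id
  · intro E _ _ hE hI
    -- a surjection from the product of residue fields
    let b : (κ →₀ κ) →ₗ[κ] (κ → κ) := Finsupp.lcoeFun
    obtain ⟨ρ, hρ⟩ := LinearMap.exists_leftInverse_of_injective b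
      (LinearMap.ker_eq_bot.2 DFunLike.coe_injective)
    let ψ : (κ → κ) →ₗ[κ] κ := Finsupp.linearCombination κ (id : κ → κ) ∘ₗ ρ
    have hψ : ∀ q : κ, ψ (Pi.single q 1) = q := by
      intro q
      have h1 : b (Finsupp.single q 1) = Pi.single q 1 := by
        ext s
        simp [b, Finsupp.single_apply, Pi.single_apply, eq_comm]
      have h2 := LinearMap.congr_fun hρ (Finsupp.single q 1)
      simp only [LinearMap.comp_apply, h1, LinearMap.id_apply] at h2
      simp [ψ, h2]
    let res : B →ₗ[R] κ := (Ideal.Quotient.mkₐ R n).toLinearMap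
    let Ψ : (κ → B) →ₗ[R] κ := (ψ.restrictScalars R) ∘ₗ
      LinearMap.pi fun t => res ∘ₗ LinearMap.proj t
    have hΨ : ∀ q : κ, Ψ (Pi.single q 1) = q := by
      intro q
      have : (LinearMap.pi fun t => res ∘ₗ LinearMap.proj t : (κ → B) →ₗ[R] κ → κ)
          (Pi.single q 1) = Pi.single q 1 := by
        ext s
        by_cases hs : s = q
        · subst hs; simp [res]
        · simp [res, hs]
      change ψ _ = q
      rw [this, hψ]
    have hf0 : ∀ q : κ, f (Pi.single q 1) = 0 := by
      intro q
      ext t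
      refine (Submodule.Quotient.mk_eq_zero _).2 ?_
      by_cases ht : t = q
      · subst ht; exact ⟨d, by simp [hd]⟩
      · simp [ht]
    obtain ⟨g, hg⟩ := hE.2 κ ⟨1, one_ne_zero⟩
    apply hI.2.2 (LinearMap.range (LinearMap.lcomp R E Ψ))
    · intro h
      apply hg
      have : LinearMap.lcomp R E Ψ g = 0 := by
        have : LinearMap.lcomp R E Ψ g ∈ LinearMap.range (LinearMap.lcomp R E Ψ) := ⟨g, rfl⟩
        rwa [h, Submodule.mem_bot] at this
      refine LinearMap.ext fun q => ?_
      have h1 : g (Ψ (Pi.single q 1)) = 0 := LinearMap.congr_fun this (Pi.single q 1)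
      rwa [hΨ] at h1
    · rw [eq_bot_iff]
      rintro _ ⟨⟨a, rfl⟩, ⟨a', ha'⟩⟩
      rw [Submodule.mem_bot]
      have ha : a = 0 := by
        refine LinearMap.ext fun q => ?_
        have h1 : a' (f (Pi.single q 1)) = a (Ψ (Pi.single q 1)) :=
          LinearMap.congr_fun ha' (Pi.single q 1)
        rw [hΨ, hf0, map_zero] at h1
        exact h1.symm
      rw [ha, map_zero]

theorem aux_elt [IsNoetherianRing R] (𝔪 : Ideal R) [𝔪.IsMaximal]
    (h𝔪 : ¬ IsAdicComplete (IsLocalRing.maximalIdeal (Localization.AtPrime 𝔪))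
            (Localization.AtPrime 𝔪) ∨
          2 ≤ ringKrullDim (Localization.AtPrime 𝔪)) :
    ∃ x ∈ 𝔪, ∀ (n : ℕ) (r : R), x ^ n * r = 0 → r ∈ 𝔪 := by
  by_contra! hcon
  have : IsArtinianRing (Localization.AtPrime 𝔪) := by
    have : IsNoetherianRing (Localization.AtPrime 𝔪) :=
      IsLocalization.isNoetherianRing 𝔪.primeCompl _ inferInstance
    rw [isArtinianRing_iff_isNilpotent_maximalIdeal]
    have hle : IsLocalRing.maximalIdeal (Localization.AtPrime 𝔪) ≤
        nilradical (Localization.AtPrime 𝔪) := by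
      rw [← Localization.AtPrime.map_eq_maximalIdeal, Ideal.map_le_iff_le_comap]
      intro x hx
      obtain ⟨n, r, h0, hr⟩ := hcon x hx
      rw [Ideal.mem_comap, mem_nilradical]
      refine ⟨n, ?_⟩
      rw [← map_pow, IsLocalization.map_eq_zero_iff 𝔪.primeCompl]
      exact ⟨⟨r, hr⟩, by rw [mul_comm]; exact h0⟩
    obtain ⟨n, hn⟩ := IsNoetherianRing.isNilpotent_nilradical (Localization.AtPrime 𝔪)
    refine ⟨n, ?_⟩
    rw [Ideal.zero_eq_bot, eq_bot_iff, ← Ideal.zero_eq_bot, ← hn]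
    exact Ideal.pow_right_mono hle n
  rcases h𝔪 with h | h
  · exact h inferInstance
  · have h1 : ringKrullDim (Localization.AtPrime 𝔪) = 0 :=
      (ringKrullDimZero_iff_ringKrullDim_eq_zero).1 inferInstance
    rw [h1] at h
    exact absurd h (by decide)

theorem aux_flat_loc {R' B : Type*} [CommRing R'] [CommRing B] [Algebra R R'] [Algebra R B]
    [Algebra R' B] [IsScalarTower R R' B] [Module.Flat R' B] (x : R)
    (hxu : IsUnit (algebraMap R B x)) (hsur : Function.Surjective (algebraMap R R'))
    (hker : ∀ r, algebraMap R R' r = 0 → ∃ n : ℕ, x ^ n * r = 0) : Module.Flat R B := by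
  apply Module.Flat.of_forall_isTrivialRelation
  intro l f b hfb
  have h0 : ∑ i, algebraMap R R' (f i) • b i = 0 := by
    simpa only [algebraMap_smul] using hfb
  obtain ⟨q, a, z, h1, h2⟩ := Module.Flat.isTrivialRelation_of_sum_smul_eq_zero
    (R := R') (M := B) (f := fun i => algebraMap R R' (f i)) (x := b) h0
  beta_reduce at h2
  choose a' ha' using fun i j => hsur (a i j)
  have h3 : ∀ j, ∃ n : ℕ, x ^ n * ∑ i, f i * a' i j = 0 := by
    intro j
    apply hker
    rw [map_sum, ← h2 j]
    exact Finset.sum_congr rfl fun i _ => by rw [map_mul, ha']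
  choose N hN using h3
  choose w hw using fun j => hxu.pow (N j)
  refine ⟨q, fun i j => x ^ N j * a' i j, fun j => (↑(w j)⁻¹ : B) * z j, fun i => ?_, fun j => ?_⟩
  · rw [h1 i]
    refine Finset.sum_congr rfl fun j _ => ?_
    rw [Algebra.smul_def, Algebra.smul_def, map_mul, map_pow, ← hw, ← ha',
      ← IsScalarTower.algebraMap_apply]
    rw [mul_comm (w j : B), mul_assoc, Units.mul_inv_cancel_left]
  · rw [← hN j, Finset.mul_sum]
    exact Finset.sum_congr rfl fun i _ => by ring

/-- Let `R` be a commutative Noetherian ring admitting a maximal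
ideal `𝔪` such that `R_𝔪` is not complete or `dim R_𝔪 ≥ 2`.  Then there exists a flat
cover `f : F → M` of `R`-modules such that for every injective cogenerator `E`, the
morphism `Hom_R(f, E)` is not an injective envelope. -/
theorem exists_flatCover_dual_not_injectiveEnvelope [IsNoetherianRing R]
    (𝔪 : Ideal R) [𝔪.IsMaximal]
    (h𝔪 : ¬ IsAdicComplete (IsLocalRing.maximalIdeal (Localization.AtPrime 𝔪))
            (Localization.AtPrime 𝔪) ∨
          2 ≤ ringKrullDim (Localization.AtPrime 𝔪)) :
    ∃ (F M : Type u) (_ : AddCommGroup F) (_ : AddCommGroup M) (_ : Module R F)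
        (_ : Module R M) (f : F →ₗ[R] M),
      IsFlatCover R f ∧
        ∀ (E : Type u) (_ : AddCommGroup E) (_ : Module R E),
          IsInjectiveCogenerator R E →
            ¬ IsInjectiveEnvelope R (LinearMap.lcomp R E f) := by
  obtain ⟨x, hx, hx0⟩ := aux_elt R 𝔪 h𝔪
  let I : Ideal R :=
    { carrier := {r | ∃ n : ℕ, x ^ n * r = 0}
      zero_mem' := ⟨0, by simp⟩
      add_mem' := by
        rintro a b ⟨n, hn⟩ ⟨k, hk⟩
        refine ⟨n + k, ?_⟩
        have : x ^ (n + k) * (a + b) = x ^ k * (x ^ n * a) + x ^ n * (x ^ k * b) := by ring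
        rw [this, hn, hk, mul_zero, mul_zero, add_zero]
      smul_mem' := by
        rintro c a ⟨n, hn⟩
        refine ⟨n, ?_⟩
        have : x ^ n * (c • a) = c * (x ^ n * a) := by rw [smul_eq_mul]; ring
        rw [this, hn, mul_zero] }
  have hI𝔪 : I ≤ 𝔪 := by
    rintro r ⟨n, hn⟩
    exact hx0 n r hn
  let R' := R ⧸ I
  let J : Ideal R' := 𝔪.map (algebraMap R R')
  let D := AdicCompletion J R'
  have hcJ : IsAdicComplete J D := AdicCompletion.isAdicComplete (IsNoetherian.noetherian J)
  have hcD : IsAdicComplete 𝔪 D := (IsAdicComplete.map_algebraMap_iff 𝔪 D).1 hcJ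
  have hreg : algebraMap R R' x ∈ nonZeroDivisors R' := by
    rw [mem_nonZeroDivisors_iff_right]
    intro z hz
    obtain ⟨r, rfl⟩ := Ideal.Quotient.mk_surjective z
    have h1 : r * x ∈ I := Ideal.Quotient.eq_zero_iff_mem.1 (by rw [map_mul]; exact hz)
    obtain ⟨n, hn⟩ := h1
    refine Ideal.Quotient.eq_zero_iff_mem.2 ⟨n + 1, ?_⟩
    rw [← hn]; ring
  have hregD : algebraMap R D x ∈ nonZeroDivisors D := by
    have h1 : IsSMulRegular D (algebraMap R R' x) :=
      Module.Flat.isSMulRegular_of_nonZeroDivisors hreg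
    rw [mem_nonZeroDivisors_iff_right]
    intro z hz
    apply h1
    change algebraMap R R' x • z = algebraMap R R' x • 0
    rw [smul_zero, algebraMap_smul, Algebra.smul_def, mul_comm, hz]
  have hDnt : Nontrivial D := by
    by_contra hnt
    rw [not_nontrivial_iff_subsingleton] at hnt
    have h1 : (AdicCompletion.of J R' 1) = 0 := Subsingleton.elim _ _
    have h2 := congrArg (AdicCompletion.eval J R' 1) h1
    rw [AdicCompletion.eval_of, map_zero, Submodule.mkQ_apply,
      Submodule.Quotient.mk_eq_zero] at h2
    have h3 : (1 : R') ∈ J := by simpa using h2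
    have h4 : (1 : R) ∈ J.comap (algebraMap R R') := by simpa using h3
    rw [Ideal.comap_map_of_surjective (algebraMap R R') Ideal.Quotient.mk_surjective] at h4
    have h5 : 𝔪 ⊔ Ideal.comap (algebraMap R R') ⊥ ≤ 𝔪 := by
      refine sup_le le_rfl fun r hr => hI𝔪 ?_
      exact Ideal.Quotient.eq_zero_iff_mem.1 hr
    exact (Ideal.ne_top_iff_one 𝔪).1 (Ideal.IsMaximal.ne_top inferInstance) (h5 h4)
  let B := Localization.Away (algebraMap R D x)
  have hinj : Function.Injective (algebraMap D B) := by
    apply IsLocalization.injective (M := Submonoid.powers (algebraMap R D x))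
    exact Submonoid.powers_le.2 hregD
  have hBnt : Nontrivial B := hinj.nontrivial
  have hxu : IsUnit (algebraMap R B x) := by
    rw [IsScalarTower.algebraMap_apply R D B]
    exact IsLocalization.Away.algebraMap_isUnit _
  have hfl : Module.Flat R' B := Module.Flat.trans R' D B
  have hflR : Module.Flat R B := by
    refine aux_flat_loc R (R' := R') x hxu Ideal.Quotient.mk_surjective fun r hr => ?_
    exact Ideal.Quotient.eq_zero_iff_mem.1 hr
  exact aux_core R 𝔪 D B (IsScalarTower.toAlgHom R D B).toLinearMap hinj 1
    (map_one (algebraMap D B)) x hx hxu
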